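/- arXiv:2512.20079 — 2 statements merged into one kernel-verified Lean document; each statement's English description precedes it below -/
import Mathlib

section
/- Fix integers k, m ≥ 1 and let p(z) = z^k·(z − 1)^m. For every z ∈ ℂ with z ≠ 0, z ≠ 1 and (k+m)z ≠ k, Chebyshev's method satisfies C_p(z) = z − z(z−1)·((k+m)(3k+3m−1)z² − 2k(3k+3m−1)z + 3k² − k)/(2((k+m)z − k)³). -/
open Polynomial

/-- Chebyshev's method applied to a polynomial `p` over `ℂ`:
`C_p(z) = z - (1 + L_p(z)/2) * p(z)/p'(z)` where `L_p(z) = p(z) p''(z) / (p'(z))^2`. -/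
noncomputable def cheb (p : Polynomial ℂ) (z : ℂ) : ℂ :=
  z - (1 + (p.eval z * (derivative (derivative p)).eval z) / ((derivative p).eval z) ^ 2 / 2)
      * (p.eval z / (derivative p).eval z)

/-!
If `w * p' = d * p` for polynomials `w` and `d`, then `p / p' = w / d`, and differentiating the
relation once expresses `p''` through `p'`, so that Chebyshev's method for `p` is a rational
function of `w`, `d`, `w'`, `d'` in which `p` no longer occurs. For `p = X ^ k * (X - 1) ^ m` the
logarithmic derivative `k / z + m / (z - 1)` gives `w = X * (X - 1)` and `d = (k + m) * X - k`.
-/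

section DifferentialEquation

theorem mul_derivative_pow {R : Type*} [CommSemiring R] (q : R[X]) (n : ℕ) :
    q * derivative (q ^ n) = n * derivative q * q ^ n := by
  cases n with
  | zero => simp
  | succ n =>
    rw [derivative_pow_succ, C_add, C_1, map_natCast]
    push_cast
    ring

theorem mul_mul_derivative_pow_mul_pow {R : Type*} [CommSemiring R] (q r : R[X]) (k m : ℕ) :
    q * r * derivative (q ^ k * r ^ m) =
      (k * derivative q * r + m * q * derivative r) * (q ^ k * r ^ m) :=
  calc
    q * r * derivative (q ^ k * r ^ m)
      = q * derivative (q ^ k) * r * r ^ m + q * q ^ k * (r * derivative (r ^ m)) := by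
        rw [derivative_mul]
        ring
    _ = (k * derivative q * r + m * q * derivative r) * (q ^ k * r ^ m) := by
        rw [mul_derivative_pow, mul_derivative_pow]
        ring

theorem mul_derivative_derivative_of_mul_derivative_eq {R : Type*} [CommRing R] {p w d : R[X]}
    (h : w * derivative p = d * p) :
    w * derivative (derivative p) = derivative d * p + (d - derivative w) * derivative p := by
  have h' := congrArg derivative h
  rw [derivative_mul, derivative_mul] at h'
  linear_combination h'

theorem X_mul_X_sub_one_mul_derivative {R : Type*} [CommRing R] (k m : ℕ) :
    X * (X - 1) * derivative (X ^ k * (X - 1) ^ m : R[X]) =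
      ((k + m : R[X]) * X - (k : R[X])) * (X ^ k * (X - 1) ^ m) := by
  rw [mul_mul_derivative_pow_mul_pow, derivative_sub, derivative_X, derivative_one]
  ring

theorem eval_derivative_ne_zero_of_mul_derivative_eq {R : Type*} [CommSemiring R]
    [NoZeroDivisors R] {p w d : R[X]} {z : R} (h : w * derivative p = d * p)
    (hd : d.eval z ≠ 0) (hp : p.eval z ≠ 0) : (derivative p).eval z ≠ 0 := by
  have hz := congrArg (eval z) h
  rw [eval_mul, eval_mul] at hz
  exact right_ne_zero_of_mul (hz ▸ mul_ne_zero hd hp)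

theorem eval_derivative_X_pow_mul_X_sub_one_pow_ne_zero {R : Type*} [CommRing R] [IsDomain R]
    {k m : ℕ} {z : R} (hz0 : z ≠ 0) (hz1 : z ≠ 1) (hzpole : ((k : R) + m) * z ≠ k) :
    (derivative (X ^ k * (X - 1) ^ m : R[X])).eval z ≠ 0 := by
  refine eval_derivative_ne_zero_of_mul_derivative_eq (X_mul_X_sub_one_mul_derivative k m) ?_ ?_
  · simpa [sub_eq_zero] using hzpole
  · simp [hz0, sub_ne_zero.mpr hz1]

end DifferentialEquation

section ChebyshevMap

variable {K : Type*} [Field K]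

/-- The degree of logarithmic convexity `L_p(z) = p(z) p''(z) / p'(z)²`, the quantity that enters
Chebyshev's method, with the junk value `0` where `p'` vanishes. -/
noncomputable def logConvexityDegree (p : K[X]) (z : K) : K :=
  p.eval z * (derivative (derivative p)).eval z / (derivative p).eval z ^ 2

/-- Chebyshev's method `C_p` over an arbitrary field; for `K = ℂ` it unfolds to `cheb`. It is
meaningful where neither `2` nor `p'(z)` vanishes. -/
noncomputable def chebyshevMap (p : K[X]) (z : K) : K :=
  z - (1 + logConvexityDegree p z / 2) * (p.eval z / (derivative p).eval z)

theorem cheb_eq_chebyshevMap (p : ℂ[X]) (z : ℂ) : cheb p z = chebyshevMap p z := rfl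

variable {p w d : K[X]} {z : K}

theorem eval_div_eval_derivative_of_mul_derivative_eq (h : w * derivative p = d * p)
    (hd : d.eval z ≠ 0) (hp' : (derivative p).eval z ≠ 0) :
    p.eval z / (derivative p).eval z = w.eval z / d.eval z := by
  have hz := congrArg (eval z) h
  rw [eval_mul, eval_mul] at hz
  rw [div_eq_div_iff hp' hd, hz, mul_comm]

theorem logConvexityDegree_eq_of_mul_derivative_eq (h : w * derivative p = d * p)
    (hd : d.eval z ≠ 0) (hp' : (derivative p).eval z ≠ 0) :
    logConvexityDegree p z =
      (d.eval z ^ 2 + (derivative d).eval z * w.eval z - d.eval z * (derivative w).eval z) /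
        d.eval z ^ 2 := by
  have hz := congrArg (eval z) h
  have hz' := congrArg (eval z) (mul_derivative_derivative_of_mul_derivative_eq h)
  simp only [eval_mul, eval_add, eval_sub] at hz hz'
  rw [logConvexityDegree, div_eq_div_iff (pow_ne_zero 2 hp') (pow_ne_zero 2 hd)]
  calc
    p.eval z * (derivative (derivative p)).eval z * d.eval z ^ 2
      = d.eval z * (derivative p).eval z * (w.eval z * (derivative (derivative p)).eval z) := by
        linear_combination -(d.eval z * (derivative (derivative p)).eval z) * hz
    _ = d.eval z * (derivative p).eval z * ((derivative d).eval z * p.eval z +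
          (d.eval z - (derivative w).eval z) * (derivative p).eval z) := by rw [hz']
    _ = (d.eval z ^ 2 + (derivative d).eval z * w.eval z - d.eval z * (derivative w).eval z) *
          (derivative p).eval z ^ 2 := by
        linear_combination -((derivative d).eval z * (derivative p).eval z) * hz

theorem chebyshevMap_eq_of_mul_derivative_eq [NeZero (2 : K)] (h : w * derivative p = d * p)
    (hd : d.eval z ≠ 0) (hp' : (derivative p).eval z ≠ 0) :
    chebyshevMap p z = z - w.eval z *
      (3 * d.eval z ^ 2 + (derivative d).eval z * w.eval z - d.eval z * (derivative w).eval z) /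
        (2 * d.eval z ^ 3) := by
  rw [chebyshevMap, logConvexityDegree_eq_of_mul_derivative_eq h hd hp',
    eval_div_eval_derivative_of_mul_derivative_eq h hd hp']
  field_simp
  ring

end ChebyshevMap

theorem chebyshev_explicit_formula_general {K : Type*} [Field K] [NeZero (2 : K)]
    (k m : ℕ) (z : K) (hp' : (derivative (X ^ k * (X - 1) ^ m : K[X])).eval z ≠ 0)
    (hzpole : ((k : K) + m) * z ≠ k) :
    chebyshevMap (X ^ k * (X - 1) ^ m) z = z - z * (z - 1) *
      (((k : K) + m) * (3 * k + 3 * m - 1) * z ^ 2 - 2 * k * (3 * k + 3 * m - 1) * z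
        + 3 * (k : K) ^ 2 - k) / (2 * (((k : K) + m) * z - k) ^ 3) := by
  have hd : ((k + m : K[X]) * X - (k : K[X])).eval z = ((k : K) + m) * z - k := by simp
  have hd' : (derivative ((k + m : K[X]) * X - (k : K[X]))).eval z = (k : K) + m := by simp
  have hw : (X * (X - 1) : K[X]).eval z = z * (z - 1) := by simp
  have hw' : (derivative (X * (X - 1) : K[X])).eval z = 2 * z - 1 := by
    simp only [derivative_mul, derivative_sub, derivative_X, derivative_one, eval_add, eval_mul,
      eval_sub, eval_X, eval_one, eval_zero]
    ring
  rw [chebyshevMap_eq_of_mul_derivative_eq (X_mul_X_sub_one_mul_derivative k m)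
    (hd ▸ sub_ne_zero.mpr hzpole) hp', hd, hd', hw, hw']
  ring

/-- For `p(z) = z^k (z-1)^m` with `k, m ≥ 1`, at every `z` with `z ≠ 0`, `z ≠ 1` and
`(k+m)z ≠ k`, Chebyshev's method is given by the explicit rational formula. -/
theorem chebyshev_explicit_formula (k m : ℕ) (hk : 1 ≤ k) (hm : 1 ≤ m)
    (p : Polynomial ℂ) (hp : p = Polynomial.X ^ k * (Polynomial.X - 1) ^ m)
    (z : ℂ) (hz0 : z ≠ 0) (hz1 : z ≠ 1) (hzpole : ((k : ℂ) + m) * z ≠ k) :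
    cheb p z = z - z * (z - 1) *
      (((k : ℂ) + m) * (3 * k + 3 * m - 1) * z ^ 2 - 2 * k * (3 * k + 3 * m - 1) * z
        + 3 * (k : ℂ) ^ 2 - k) / (2 * (((k : ℂ) + m) * z - k) ^ 3) := by
  rw [hp, cheb_eq_chebyshevMap]
  exact chebyshev_explicit_formula_general k m z
    (eval_derivative_X_pow_mul_X_sub_one_pow_ne_zero hz0 hz1 hzpole) hzpole
end

section
/- Fix integers k, m ≥ 1 and let e₁ = k/(k+m) − √(km(3k+3m−1))/((k+m)(3k+3m−1)) and e₂ = k/(k+m) + √(km(3k+3m−1))/((k+m)(3k+3m−1)) be the two extraneous fixed points of C. Then for every real x < e₁ the iterates Cⁿ(x) converge to 0 as n → ∞, and for every real x > e₂ the iterates Cⁿ(x) converge to 1 as n → ∞; i.e. (−∞, e₁) is contained in the basin of 0 and (e₂, ∞) is contained in the basin of 1. -/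
open Filter

/-!
In the coordinate `t = 1 / (k - (k + m) x)` the Chebyshev map reads `C x = r(t) x` with a cubic
multiplier `r`. Left of `e₁` one has `0 < t` and `k m t² < 3k + 3m - 1`, which puts `r(t)` in
`[0, 1)`, uniformly away from `1` on each ray `(-∞, b]` with `b < e₁`. Since `0 < e₁`, the ray
may be taken to contain `0`; it is then invariant and `C` contracts it towards `0`.
The reflection `x ↦ 1 - x`, which swaps `k` and `m`, carries this to the right of `e₂`.
-/

section Contraction

variable {E : Type*} [SeminormedAddCommGroup E] [NormedSpace ℝ E]

theorem tendsto_iterate_zero_of_starConvex {s : Set E} {f : E → E} {c : ℝ}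
    (hs : StarConvex ℝ 0 s) (hc : c < 1) (hf : ∀ x ∈ s, ∃ r ∈ Set.Icc 0 c, f x = r • x)
    {x : E} (hx : x ∈ s) : Tendsto (fun n : ℕ => f^[n] x) atTop (nhds 0) := by
  have hc₀ : 0 ≤ c := by
    obtain ⟨r, hr, -⟩ := hf x hx
    exact hr.1.trans hr.2
  have hmaps : Set.MapsTo f s s := fun y hy => by
    obtain ⟨r, hr, hfy⟩ := hf y hy
    exact hfy ▸ hs.smul_mem hy hr.1 (hr.2.trans hc.le)
  have hnorm : ∀ y ∈ s, ‖f y‖ ≤ c * ‖y‖ := fun y hy => by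
    obtain ⟨r, hr, hfy⟩ := hf y hy
    rw [hfy, norm_smul, Real.norm_of_nonneg hr.1]
    exact mul_le_mul_of_nonneg_right hr.2 (norm_nonneg y)
  have hgeom : ∀ n : ℕ, ‖f^[n] x‖ ≤ c ^ n * ‖x‖ := fun n =>
    le_geom (u := fun n => ‖f^[n] x‖) hc₀ n fun i _ => by
      simpa only [Function.iterate_succ_apply'] using hnorm _ (hmaps.iterate i hx)
  refine squeeze_zero_norm hgeom ?_
  simpa only [zero_mul] using (tendsto_pow_atTop_nhds_zero_of_lt_one hc₀ hc).mul_const ‖x‖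

end Contraction

/-- `C` is Chebyshev's method for `z ^ k * (z - 1) ^ m`, with real exponents `k` and `m`. The value
of `C` at the pole `k / (k + m)` is left arbitrary. -/
def IsChebyshevMap (k m : ℝ) (C : ℝ → ℝ) : Prop :=
  ∀ x : ℝ, x ≠ k / (k + m) →
    C x = x - x * (x - 1) *
      ((k + m) * (3 * k + 3 * m - 1) * x ^ 2 - 2 * k * (3 * k + 3 * m - 1) * x
        + (3 * k ^ 2 - k)) / (2 * ((k + m) * x - k) ^ 3)

/-- The distance from the pole `k / (k + m)` of the Chebyshev map for `z ^ k * (z - 1) ^ m` to each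
of its two extraneous fixed points, which lie symmetrically about the pole. -/
noncomputable def extraneousOffset (k m : ℝ) : ℝ :=
  Real.sqrt (k * m * (3 * k + 3 * m - 1)) / ((k + m) * (3 * k + 3 * m - 1))

/-- The ratio `C x / x` for the Chebyshev map `C` of `z ^ k * (z - 1) ^ m`, as a function of
`t = 1 / (k - (k + m) * x)`. -/
noncomputable def chebyshevMultiplier (k m t : ℝ) : ℝ :=
  1 - (1 + m * t) * (3 * k + 3 * m - 1 - k * m * t ^ 2) / (2 * (k + m) ^ 2)

theorem extraneousOffset_comm (k m : ℝ) : extraneousOffset k m = extraneousOffset m k := by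
  unfold extraneousOffset
  ring_nf

section Multiplier

variable {k m : ℝ}

theorem lt_pole_sub_extraneousOffset_iff (h : 1 < 3 * k + 3 * m) {x : ℝ} :
    x < k / (k + m) - extraneousOffset k m ↔
      0 < k - (k + m) * x ∧ k * m < (3 * k + 3 * m - 1) * (k - (k + m) * x) ^ 2 := by
  have hs : 0 < k + m := by linarith
  have ha : 0 < 3 * k + 3 * m - 1 := by linarith
  have hsqrt : x < k / (k + m) - extraneousOffset k m ↔
      Real.sqrt (k * m * (3 * k + 3 * m - 1)) < (3 * k + 3 * m - 1) * (k - (k + m) * x) := by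
    rw [extraneousOffset, lt_sub_comm, div_lt_iff₀ (by positivity)]
    congr! 1
    field_simp
  have hsq (hv : 0 < k - (k + m) * x) :
      Real.sqrt (k * m * (3 * k + 3 * m - 1)) < (3 * k + 3 * m - 1) * (k - (k + m) * x) ↔
        k * m < (3 * k + 3 * m - 1) * (k - (k + m) * x) ^ 2 := by
    have hexpand : ((3 * k + 3 * m - 1) * (k - (k + m) * x)) ^ 2 =
        (3 * k + 3 * m - 1) * (k - (k + m) * x) ^ 2 * (3 * k + 3 * m - 1) := by ring
    rw [Real.sqrt_lt' (by positivity), hexpand, mul_lt_mul_iff_left₀ ha]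
  rw [hsqrt]
  constructor
  · intro hlt
    have hv := pos_of_mul_pos_right ((Real.sqrt_nonneg _).trans_lt hlt) ha.le
    exact ⟨hv, (hsq hv).1 hlt⟩
  · rintro ⟨hv, hlt⟩
    exact (hsq hv).2 hlt

theorem pole_sub_extraneousOffset_pos (hk : 1 ≤ k) (hm : 0 ≤ m) :
    0 < k / (k + m) - extraneousOffset k m := by
  rw [lt_pole_sub_extraneousOffset_iff (by linarith), mul_zero, sub_zero]
  have hmk : m < (3 * k + 3 * m - 1) * k := by nlinarith
  refine ⟨by linarith, ?_⟩
  calc k * m < k * ((3 * k + 3 * m - 1) * k) := by gcongr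
    _ = (3 * k + 3 * m - 1) * k ^ 2 := by ring

theorem chebyshevMultiplier_nonneg {t : ℝ} (hk : 1 ≤ k) (hm : 0 ≤ m) (ht : 0 ≤ t) :
    0 ≤ chebyshevMultiplier k m t := by
  have hlin : 0 ≤ 2 * k - 1 := by linarith
  have hquad : 0 ≤ t ^ 2 - 3 * t + 4 := by nlinarith [sq_nonneg (2 * t - 3)]
  have hnum : (1 + m * t) * (3 * k + 3 * m - 1 - k * m * t ^ 2) ≤ 2 * (k + m) ^ 2 := by
    rw [← sub_nonneg]
    calc 0 ≤ m ^ 2 * ((t - 1) ^ 2 * (t + 2) + (k - 1) * t ^ 3)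
          + m * ((t - 1) ^ 2 + (k - 1) * (t ^ 2 - 3 * t + 4)) + (2 * k - 1) * (k - 1) := by
          positivity
      _ = 2 * (k + m) ^ 2 - (1 + m * t) * (3 * k + 3 * m - 1 - k * m * t ^ 2) := by ring
  exact sub_nonneg.2 (div_le_one_of_le₀ hnum (by positivity))

theorem chebyshevMultiplier_le {t T : ℝ} (hk : 0 ≤ k) (hm : 0 ≤ m) (ht : 0 ≤ t) (htT : t ≤ T)
    (hT : k * m * T ^ 2 ≤ 3 * k + 3 * m - 1) :
    chebyshevMultiplier k m t ≤ 1 - (3 * k + 3 * m - 1 - k * m * T ^ 2) / (2 * (k + m) ^ 2) := by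
  have hfactor : 1 ≤ 1 + m * t := le_add_of_nonneg_right (by positivity)
  unfold chebyshevMultiplier
  gcongr 1 - ?_ / _
  calc 3 * k + 3 * m - 1 - k * m * T ^ 2
      ≤ (1 + m * t) * (3 * k + 3 * m - 1 - k * m * T ^ 2) :=
        le_mul_of_one_le_left (sub_nonneg.2 hT) hfactor
    _ ≤ (1 + m * t) * (3 * k + 3 * m - 1 - k * m * t ^ 2) := by gcongr

end Multiplier

namespace IsChebyshevMap

variable {k m : ℝ} {C : ℝ → ℝ}

theorem apply_eq_multiplier_mul (hC : IsChebyshevMap k m C) (hs : k + m ≠ 0) {x : ℝ}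
    (hx : k - (k + m) * x ≠ 0) : C x = chebyshevMultiplier k m (k - (k + m) * x)⁻¹ * x := by
  have hpole : x ≠ k / (k + m) := by
    rintro rfl
    exact hx (by field_simp; ring)
  obtain ⟨v, hv⟩ : ∃ v, v = k - (k + m) * x := ⟨_, rfl⟩
  rw [← hv] at hx
  have hden : (k + m) * x - k = -v := by rw [hv]; ring
  have hroot : x - 1 = -(v + m) / (k + m) := by
    rw [eq_div_iff hs, hv]
    ring
  have hquad : (k + m) * (3 * k + 3 * m - 1) * x ^ 2 - 2 * k * (3 * k + 3 * m - 1) * x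
      + (3 * k ^ 2 - k) = ((3 * k + 3 * m - 1) * v ^ 2 - k * m) / (k + m) := by
    rw [eq_div_iff hs, hv]
    ring
  rw [hC x hpole, hquad, hroot, hden, ← hv, chebyshevMultiplier]
  field_simp

theorem exists_uniform_multiplier (hC : IsChebyshevMap k m C) (hk : 1 ≤ k) (hm : 0 ≤ m) {b : ℝ}
    (hb : b < k / (k + m) - extraneousOffset k m) :
    ∃ c < (1 : ℝ), ∀ x ∈ Set.Iic b, ∃ r ∈ Set.Icc (0 : ℝ) c, C x = r • x := by
  have hs : 0 < k + m := by linarith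
  obtain ⟨hvb, hlt⟩ := (lt_pole_sub_extraneousOffset_iff (by linarith)).1 hb
  set T := (k - (k + m) * b)⁻¹
  have hT : k * m * T ^ 2 < 3 * k + 3 * m - 1 := by
    rwa [inv_pow, ← div_eq_mul_inv, div_lt_iff₀ (by positivity)]
  refine ⟨1 - (3 * k + 3 * m - 1 - k * m * T ^ 2) / (2 * (k + m) ^ 2),
    sub_lt_self _ (div_pos (sub_pos.2 hT) (by positivity)), fun x hx => ?_⟩
  have hvle : k - (k + m) * b ≤ k - (k + m) * x := by gcongr; exact hx
  have hv : 0 < k - (k + m) * x := hvb.trans_le hvle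
  have ht : 0 ≤ (k - (k + m) * x)⁻¹ := by positivity
  exact ⟨_, ⟨chebyshevMultiplier_nonneg hk hm ht,
    chebyshevMultiplier_le (by linarith) hm ht (inv_anti₀ hvb hvle) hT.le⟩,
    hC.apply_eq_multiplier_mul hs.ne' hv.ne'⟩

theorem tendsto_iterate_zero (hC : IsChebyshevMap k m C) (hk : 1 ≤ k) (hm : 0 ≤ m) {x : ℝ}
    (hx : x < k / (k + m) - extraneousOffset k m) :
    Tendsto (fun n : ℕ => C^[n] x) atTop (nhds 0) := by
  obtain ⟨c, hc, hmul⟩ :=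
    hC.exists_uniform_multiplier hk hm (max_lt hx (pole_sub_extraneousOffset_pos hk hm))
  have hstar : StarConvex ℝ 0 (Set.Iic (max x 0)) := (convex_Iic _).starConvex (le_max_right x 0)
  exact tendsto_iterate_zero_of_starConvex hstar hc hmul (le_max_left x 0)

theorem one_sub (hC : IsChebyshevMap k m C) (hs : k + m ≠ 0) :
    IsChebyshevMap m k (fun y => 1 - C (1 - y)) := by
  intro y hy
  have hs' : m + k ≠ 0 := by rwa [add_comm]
  have hu : (m + k) * y - m ≠ 0 := fun h => hy (by rw [eq_div_iff hs']; linarith)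
  have hpole : 1 - y ≠ k / (k + m) := fun h => by
    rw [eq_div_iff hs] at h
    exact hu (by linarith)
  have hden : (k + m) * (1 - y) - k = -((m + k) * y - m) := by ring
  simp only [hC _ hpole, hden]
  field_simp
  ring

theorem tendsto_iterate_one (hC : IsChebyshevMap k m C) (hk : 0 ≤ k) (hm : 1 ≤ m) {x : ℝ}
    (hx : k / (k + m) + extraneousOffset k m < x) :
    Tendsto (fun n : ℕ => C^[n] x) atTop (nhds 1) := by
  have hs : k + m ≠ 0 := by linarith
  have hpole : m / (m + k) = 1 - k / (k + m) := by
    rw [add_comm m k, one_sub_div hs, add_sub_cancel_left]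
  have hx' : 1 - x < m / (m + k) - extraneousOffset m k := by
    rw [hpole, extraneousOffset_comm m k]
    linarith
  have hconj : Function.Semiconj (fun y => 1 - y) (fun y => 1 - C (1 - y)) C := fun y =>
    sub_sub_cancel 1 (C (1 - y))
  have hiter (n : ℕ) : 1 - (fun y => 1 - C (1 - y))^[n] (1 - x) = C^[n] x := by
    simpa only [sub_sub_cancel] using hconj.iterate_right n (1 - x)
  simpa only [hiter, sub_zero] using
    ((hC.one_sub hs).tendsto_iterate_zero hm hk hx').const_sub 1

end IsChebyshevMap

theorem basins_contain_rays_general {k m : ℝ} {C : ℝ → ℝ} (hk : 1 ≤ k) (hm : 1 ≤ m)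
    (hC : IsChebyshevMap k m C) :
    (∀ x < k / (k + m) - extraneousOffset k m, Tendsto (fun n : ℕ => C^[n] x) atTop (nhds 0)) ∧
      (∀ x > k / (k + m) + extraneousOffset k m,
        Tendsto (fun n : ℕ => C^[n] x) atTop (nhds 1)) :=
  ⟨fun _ hx => hC.tendsto_iterate_zero hk (zero_le_one.trans hm) hx,
    fun _ hx => hC.tendsto_iterate_one (zero_le_one.trans hk) hm hx⟩

/-- For `k, m ≥ 1`, with `e₁ < e₂` the two extraneous fixed points of the Chebyshev map
`C` for `z^k(z-1)^m`: for every `x < e₁` the iterates `Cⁿ(x)` converge to `0`, and for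
every `x > e₂` they converge to `1`; i.e. `(-∞, e₁)` lies in the basin of `0` and
`(e₂, ∞)` in the basin of `1`. -/
theorem basins_contain_rays (k m : ℕ) (hk : 1 ≤ k) (hm : 1 ≤ m)
    (C : ℝ → ℝ)
    (hC : ∀ x : ℝ, x ≠ (k : ℝ) / ((k : ℝ) + m) →
      C x = x - x * (x - 1) *
        (((k : ℝ) + m) * (3 * k + 3 * m - 1) * x ^ 2 - 2 * k * (3 * k + 3 * m - 1) * x
          + (3 * (k : ℝ) ^ 2 - k)) / (2 * (((k : ℝ) + m) * x - k) ^ 3))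
    (e₁ e₂ : ℝ)
    (he₁ : e₁ = (k : ℝ) / ((k : ℝ) + m)
      - Real.sqrt ((k : ℝ) * m * (3 * k + 3 * m - 1)) / (((k : ℝ) + m) * (3 * k + 3 * m - 1)))
    (he₂ : e₂ = (k : ℝ) / ((k : ℝ) + m)
      + Real.sqrt ((k : ℝ) * m * (3 * k + 3 * m - 1)) / (((k : ℝ) + m) * (3 * k + 3 * m - 1))) :
    (∀ x : ℝ, x < e₁ → Tendsto (fun n : ℕ => C^[n] x) atTop (nhds 0)) ∧
      (∀ x : ℝ, e₂ < x → Tendsto (fun n : ℕ => C^[n] x) atTop (nhds 1)) := by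
  subst he₁ he₂
  exact basins_contain_rays_general (mod_cast hk) (mod_cast hm) hC
end
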